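/- Let ℓ_min be a valid lower bound, i.e., ℓ_min ≤ ℓ_opt(G, k). Let V_prep = { v ∈ V : ω_G(v) ≤ ℓ_min }, Ṽ = V ∖ V_prep and G̃ = G[Ṽ] the induced subgraph. Then ℓ_opt(G, k) = max{ ℓ_opt(G̃, k), ℓ_min }. Furthermore, every optimal interdiction policy W̃ ⊆ Ṽ for G̃ is also an optimal interdiction policy for G. -/

import Mathlib

open Finset
open scoped Classical

noncomputable section

/-- The clique number `ω(G)` of a graph: the maximum size of a set of pairwise adjacent
vertices. -/
def omega {W : Type*} (G : SimpleGraph W) : ℕ :=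
  sSup {n | ∃ s : Finset W, G.IsNClique n s}

/-- `ω(G - W)`: the clique number of the subgraph of `G` induced on the complement of
`W`. -/
def omegaDel {W : Type*} (G : SimpleGraph W) (D : Finset W) : ℕ :=
  omega (G.induce ((↑D : Set W)ᶜ))

/-- `ℓ_opt(G,k)`: the optimal value of the maximum clique interdiction problem,
`min { ω(G - W) : W ⊆ V, |W| ≤ k }`. -/
def lopt {W : Type*} (G : SimpleGraph W) (k : ℕ) : ℕ :=
  sInf {q | ∃ D : Finset W, D.card ≤ k ∧ q = omegaDel G D}

/-- `ω_G(v)`: the maximum size of a clique of `G` containing the vertex `v`. -/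
def omegaAt {W : Type*} (G : SimpleGraph W) (v : W) : ℕ :=
  sSup {n | ∃ s : Finset W, G.IsNClique n s ∧ v ∈ s}

theorem omegaDel_le_iff {W : Type*} [Finite W] (G : SimpleGraph W) (D : Finset W) (m : ℕ) :
    omegaDel G D ≤ m ↔ ∀ s : Finset W, G.IsClique (s : Set W) → (∀ v ∈ s, v ∉ D) → s.card ≤ m := by
  have : Fintype W := Fintype.ofFinite W
  unfold omegaDel omega
  constructor
  · intro h s hs hd
    refine le_trans (le_csSup ⟨Fintype.card ((↑D : Set W)ᶜ : Set W), ?_⟩ ?_) h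
    · rintro n ⟨t, ht⟩
      rw [← ht.card_eq]
      exact Finset.card_le_univ t
    · refine ⟨s.attach.image (fun v => ⟨v.1, by simpa using hd v.1 v.2⟩), ?_, ?_⟩
      · intro a ha b hb hab
        simp only [Finset.coe_image, Set.mem_image] at ha hb
        obtain ⟨a', -, rfl⟩ := ha
        obtain ⟨b', -, rfl⟩ := hb
        exact hs a'.2 b'.2 (fun e => hab (by simp [e]))
      · rw [Finset.card_image_of_injective, Finset.card_attach]
        intro a b hab
        exact Subtype.ext (by simpa using hab)
  · intro h
    refine csSup_le ⟨0, ∅, by simp⟩ ?_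
    rintro n ⟨t, ht⟩
    rw [← ht.card_eq, ← Finset.card_image_of_injective t Subtype.val_injective]
    apply h
    · intro a ha b hb hab
      simp only [Finset.coe_image, Set.mem_image] at ha hb
      obtain ⟨a', ha', rfl⟩ := ha
      obtain ⟨b', hb', rfl⟩ := hb
      exact ht.isClique ha' hb' (fun e => hab (by simp [e]))
    · intro v hv
      obtain ⟨a, -, rfl⟩ := Finset.mem_image.1 hv
      exact fun h => a.2 (Finset.mem_coe.2 h)

theorem lopt_le {W : Type*} (G : SimpleGraph W) (k : ℕ) (D : Finset W) (h : D.card ≤ k) :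
    lopt G k ≤ omegaDel G D := Nat.sInf_le ⟨D, h, rfl⟩

theorem exists_lopt {W : Type*} (G : SimpleGraph W) (k : ℕ) :
    ∃ D : Finset W, D.card ≤ k ∧ lopt G k = omegaDel G D :=
  Nat.sInf_mem (s := {q | ∃ D : Finset W, D.card ≤ k ∧ q = omegaDel G D})
    ⟨_, ∅, by simp, rfl⟩

theorem card_le_omegaAt {W : Type*} [Finite W] (G : SimpleGraph W) (v : W) (s : Finset W)
    (hs : G.IsClique (s : Set W)) (hv : v ∈ s) : s.card ≤ omegaAt G v := by
  have : Fintype W := Fintype.ofFinite W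
  refine le_csSup ⟨Fintype.card W, ?_⟩ ⟨s, ⟨hs, rfl⟩, hv⟩
  rintro n ⟨t, ht, -⟩
  rw [← ht.card_eq]
  exact Finset.card_le_univ t

/-- **Proposition 5.2.4** (preprocessing): let `ℓ_min ≤ ℓ_opt(G,k)`,
`V_prep = {v : ω_G(v) ≤ ℓ_min}`, `Ṽ = V ∖ V_prep` and `G̃ = G[Ṽ]`. Then
`ℓ_opt(G,k) = max(ℓ_opt(G̃,k), ℓ_min)`, and every optimal interdiction policy for `G̃`
is (via the inclusion `Ṽ ⊆ V`) also an optimal interdiction policy for `G`. -/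
theorem stmt_16 {V : Type*} [Fintype V] (G : SimpleGraph V) (k : ℕ) (hk : 0 < k)
    (lmin : ℕ) (hlb : lmin ≤ lopt G k) :
    ∀ Vt : Set V, Vt = {v : V | ¬ omegaAt G v ≤ lmin} →
      (lopt G k = max (lopt (G.induce Vt) k) lmin ∧
        ∀ Wt : Finset Vt, Wt.card ≤ k →
          omegaDel (G.induce Vt) Wt = lopt (G.induce Vt) k →
            (Wt.image Subtype.val).card ≤ k ∧
              omegaDel G (Wt.image Subtype.val) = lopt G k) := by
  rintro Vt hVt
  -- deleting from the reduced graph controls deleting from the full graph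
  have hup : ∀ Wt : Finset Vt, omegaDel G (Wt.image Subtype.val) ≤
      max (omegaDel (G.induce Vt) Wt) lmin := by
    intro Wt
    rw [omegaDel_le_iff]
    intro s hs hd
    by_cases hsub : ∀ v ∈ s, v ∈ Vt
    · refine le_max_of_le_left ?_
      have key := (omegaDel_le_iff (G.induce Vt) Wt _).1 le_rfl
        (s.attach.image (fun v => (⟨v.1, hsub v.1 v.2⟩ : Vt))) ?_ ?_
      · rwa [Finset.card_image_of_injective, Finset.card_attach] at key
        intro a b hab
        exact Subtype.ext (by simpa using hab)
      · intro a ha b hb hab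
        simp only [Finset.coe_image, Set.mem_image] at ha hb
        obtain ⟨a', -, rfl⟩ := ha
        obtain ⟨b', -, rfl⟩ := hb
        exact hs a'.2 b'.2 (fun e => hab (by simp [e]))
      · intro v hv hvW
        obtain ⟨a, -, rfl⟩ := Finset.mem_image.1 hv
        exact hd a.1 a.2 (Finset.mem_image.2 ⟨_, hvW, rfl⟩)
    · push Not at hsub
      obtain ⟨v, hv, hvV⟩ := hsub
      have h1 : omegaAt G v ≤ lmin := by
        by_contra hc
        exact hvV (by rw [hVt]; exact hc)
      exact le_max_of_le_right ((card_le_omegaAt G v s hs hv).trans h1)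
  have hcard : ∀ Wt : Finset Vt, Wt.card ≤ k → (Wt.image Subtype.val).card ≤ k :=
    fun Wt h => Finset.card_image_le.trans h
  have hdown : lopt (G.induce Vt) k ≤ lopt G k := by
    obtain ⟨D, hD, hE⟩ := exists_lopt G k
    rw [hE]
    have hc : (D.subtype (· ∈ Vt)).card ≤ k := by
      rw [Finset.card_subtype]
      exact (Finset.card_filter_le _ _).trans hD
    refine (lopt_le _ k _ hc).trans ?_
    rw [omegaDel_le_iff]
    intro t ht hd
    rw [← Finset.card_image_of_injective t Subtype.val_injective]
    apply (omegaDel_le_iff G D _).1 le_rfl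
    · intro a ha b hb hab
      simp only [Finset.coe_image, Set.mem_image] at ha hb
      obtain ⟨a', ha', rfl⟩ := ha
      obtain ⟨b', hb', rfl⟩ := hb
      exact ht ha' hb' (fun e => hab (by simp [e]))
    · intro v hv hvD
      obtain ⟨a, ha, rfl⟩ := Finset.mem_image.1 hv
      exact hd a ha (by simpa using hvD)
  have hmax : lopt G k = max (lopt (G.induce Vt) k) lmin := by
    apply le_antisymm _ (max_le hdown hlb)
    obtain ⟨D, hD, hE⟩ := exists_lopt (G.induce Vt) k
    rw [hE]
    exact (lopt_le G k _ (hcard D hD)).trans (hup D)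
  refine ⟨hmax, fun Wt hW hopt => ⟨hcard Wt hW, ?_⟩⟩
  apply le_antisymm _ (lopt_le G k _ (hcard Wt hW))
  rw [hmax, ← hopt]
  exact hup Wt

end
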